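/- Fix a real number c with 0 < c < 1 and set β₃ = (c√(1−c²) + √(3−8c+6c²−c⁴))/2. Then for all real t, ψ₄(t,β₃) = −(1/4)(1−c)⁴(2+c−√(3+4c+c²))² t²(1−t²)³; in particular ψ₄(t,β₃) ≤ 0 for all t ∈ [−1,1]. -/

import Mathlib

noncomputable def alpha1 (c : ℝ) : ℝ := -(Real.sqrt (1 - c^2)/2) * (Real.sqrt (3 + c^2) + c)
noncomputable def alpha2 (c : ℝ) : ℝ := (Real.sqrt (1 - c^2)/2) * (Real.sqrt (3 + c^2) - c)
noncomputable def beta1 (c : ℝ) : ℝ :=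
  (c*Real.sqrt (1 - c^2) - Real.sqrt (3 + 8*c + 6*c^2 - c^4))/2
noncomputable def beta2 (c : ℝ) : ℝ :=
  (c*Real.sqrt (1 - c^2) - Real.sqrt (3 - 8*c + 6*c^2 - c^4))/2
noncomputable def beta3 (c : ℝ) : ℝ :=
  (c*Real.sqrt (1 - c^2) + Real.sqrt (3 - 8*c + 6*c^2 - c^4))/2
noncomputable def beta4 (c : ℝ) : ℝ :=
  (c*Real.sqrt (1 - c^2) + Real.sqrt (3 + 8*c + 6*c^2 - c^4))/2

/-- Simplified radial error of the quartic G² Bézier approximant of the unit circular arc. -/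
noncomputable def psi4 (c t ξ : ℝ) : ℝ :=
  ((t^2 - 1)^3/(64*c^2)) *
    (16*(ξ - alpha1 c)^2*(ξ - alpha2 c)^2*t^2
      - 16*(ξ - beta1 c)*(ξ - beta2 c)*(ξ - beta3 c)*(ξ - beta4 c))

/-- Explicit form of `ψ₄(·,β₃)`; in particular it is nonpositive on `[−1,1]`. -/
theorem stmt_6 (c : ℝ) (hc0 : 0 < c) (hc1 : c < 1) :
    (∀ t : ℝ, psi4 c t (beta3 c) =
      -(1/4)*(1 - c)^4*(2 + c - Real.sqrt (3 + 4*c + c^2))^2*t^2*(1 - t^2)^3) ∧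
    ∀ t ∈ Set.Icc (-1 : ℝ) 1, psi4 c t (beta3 c) ≤ 0 := by
  have hs : Real.sqrt (1 - c^2) ^ 2 = 1 - c^2 := Real.sq_sqrt (by nlinarith)
  have hu : Real.sqrt (3 + c^2) ^ 2 = 3 + c^2 := Real.sq_sqrt (by positivity)
  have hq0 : 0 ≤ 3 - 8*c + 6*c^2 - c^4 := by
    have h : 3 - 8*c + 6*c^2 - c^4 = (1 - c)^3 * (3 + c) := by ring
    rw [h]
    have : 0 < 1 - c := by linarith
    positivity
  have hq : Real.sqrt (3 - 8*c + 6*c^2 - c^4) ^ 2 = 3 - 8*c + 6*c^2 - c^4 := Real.sq_sqrt hq0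
  have hsq : Real.sqrt (1 - c^2) * Real.sqrt (3 - 8*c + 6*c^2 - c^4)
      = (1 - c)^2 * Real.sqrt (3 + 4*c + c^2) := by
    rw [← Real.sqrt_mul (by nlinarith)]
    have h : (1 - c^2) * (3 - 8*c + 6*c^2 - c^4) = ((1 - c)^2)^2 * (3 + 4*c + c^2) := by ring
    rw [h, Real.sqrt_mul (by positivity), Real.sqrt_sq (by positivity)]
  have key : (beta3 c - alpha1 c) * (beta3 c - alpha2 c)
      = -((1 - c)^2 * c * (2 + c - Real.sqrt (3 + 4*c + c^2))) := by
    unfold beta3 alpha1 alpha2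
    generalize Real.sqrt (1 - c^2) = s at *
    generalize Real.sqrt (3 + c^2) = u at *
    generalize Real.sqrt (3 - 8*c + 6*c^2 - c^4) = q at *
    generalize Real.sqrt (3 + 4*c + c^2) = r at *
    linear_combination (3/4*c^2 - 3/4) * hs + (1/4) * hq + c * hsq - (s^2/4) * hu
  have main : ∀ t : ℝ, psi4 c t (beta3 c) =
      -(1/4)*(1 - c)^4*(2 + c - Real.sqrt (3 + 4*c + c^2))^2*t^2*(1 - t^2)^3 := by
    intro t
    have h : psi4 c t (beta3 c) = ((t^2 - 1)^3/(64*c^2)) *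
        (16 * ((beta3 c - alpha1 c) * (beta3 c - alpha2 c))^2 * t^2) := by
      unfold psi4
      ring
    rw [h, key]
    field_simp
    ring
  refine ⟨main, fun t ht => ?_⟩
  rw [main t]
  have h1 : 0 ≤ 1 - t^2 := by nlinarith [ht.1, ht.2]
  have h2 : 0 ≤ (1/4)*(1 - c)^4*(2 + c - Real.sqrt (3 + 4*c + c^2))^2*t^2*(1 - t^2)^3 := by
    have : 0 ≤ 1 - c := by linarith
    positivity
  linarith
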